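/- For all c > 0 and ε > 0 there exists δ > 0 such that for all sufficiently large N, the following holds: for every η with 0 ≤ η ≤ c/√N, every pair of Borel sets A, B ⊆ ℝ^N with γ^N(A) ≥ 2^{-δN} and γ^N(B) ≥ 2^{-δN}, and every s ∈ ℝ, one has (1/2)·( e^s · Ξ_{-η}(A × B) + e^{-s} · Ξ_{η}(A × B) ) ≥ (1 - ε)·γ^N(A)·γ^N(B). -/

import Mathlib

open MeasureTheory ProbabilityTheory

/-- The standard Gaussian measure `γ^N` on `ℝ^N`. -/
noncomputable def stdGaussianPi (N : ℕ) : Measure (Fin N → ℝ) :=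
  Measure.pi fun _ => gaussianReal 0 1

/-- The measure `Ξ_η` on `ℝ^N × ℝ^N`: `x, z` independent standard Gaussians and
`y = η x + √(1-η²) z`. -/
noncomputable def Xi (N : ℕ) (η : ℝ) : Measure ((Fin N → ℝ) × (Fin N → ℝ)) :=
  Measure.map (fun xz => (xz.1, η • xz.1 + Real.sqrt (1 - η ^ 2) • xz.2))
    ((stdGaussianPi N).prod (stdGaussianPi N))

open Module
open scoped RealInnerProductSpace ENNReal

/-- The Laplace transform of the square of a standard Gaussian. -/
lemma lintegral_exp_mul_sq_gaussianReal {θ : ℝ} (hθ : θ < 1 / 2) :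
    ∫⁻ g, ENNReal.ofReal (Real.exp (θ * g ^ 2)) ∂gaussianReal 0 1
      = ENNReal.ofReal (√(1 - 2 * θ))⁻¹ := by
  have hpos : 0 < 1 - 2 * θ := by linarith
  set v : NNReal := Real.toNNReal (1 - 2 * θ)⁻¹ with hv
  have hvr : (v : ℝ) = (1 - 2 * θ)⁻¹ := Real.coe_toNNReal _ (by positivity)
  have hv0 : v ≠ 0 := by
    rw [hv]; simpa using hpos
  rw [gaussianReal_of_var_ne_zero _ one_ne_zero,
    lintegral_withDensity_eq_lintegral_mul _ (measurable_gaussianPDF 0 1) (by fun_prop)]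
  have hpt : ∀ g : ℝ, (gaussianPDF 0 1 * fun g => ENNReal.ofReal (Real.exp (θ * g ^ 2))) g
      = ENNReal.ofReal (√(1 - 2 * θ))⁻¹ * gaussianPDF 0 v g := by
    intro g
    simp only [Pi.mul_apply, gaussianPDF]
    rw [← ENNReal.ofReal_mul (gaussianPDFReal_nonneg _ _ _), ← ENNReal.ofReal_mul (by positivity)]
    congr 1
    simp only [gaussianPDFReal, hvr, NNReal.coe_one, mul_one, sub_zero]
    have h1 : √(2 * Real.pi * (1 - 2 * θ)⁻¹) = √(2 * Real.pi) * (√(1 - 2 * θ))⁻¹ := by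
      rw [Real.sqrt_mul (by positivity), Real.sqrt_inv]
    have h2 : √(1 - 2 * θ) ≠ 0 := (Real.sqrt_pos.2 hpos).ne'
    rw [h1, mul_assoc, ← Real.exp_add, mul_inv, inv_inv]
    have h3 : -g ^ 2 / 2 + θ * g ^ 2 = -g ^ 2 / (2 * (1 - 2 * θ)⁻¹) := by
      field_simp; ring
    rw [h3]
    field_simp
  rw [lintegral_congr hpt, lintegral_const_mul _ (measurable_gaussianPDF 0 v),
    lintegral_gaussianPDF_eq_one 0 hv0, mul_one]

section

variable {E : Type*} [NormedAddCommGroup E] [InnerProductSpace ℝ E] [FiniteDimensional ℝ E]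
  [MeasurableSpace E] [BorelSpace E]

/-- Resampling the component of a standard Gaussian vector along `u` preserves its law. -/
lemma stdGaussian_map_resample {u : E} (hu : ‖u‖ = 1 ∨ u = 0) :
    ((stdGaussian E).prod (gaussianReal 0 1)).map
      (fun p : E × ℝ => p.1 + (p.2 - ⟪u, p.1⟫) • u) = stdGaussian E := by
  have hmeas : Measurable (fun p : E × ℝ => p.1 + (p.2 - ⟪u, p.1⟫) • u) := by fun_prop
  have := Measure.isProbabilityMeasure_map (μ := (stdGaussian E).prod (gaussianReal 0 1))
    hmeas.aemeasurable
  apply Measure.ext_of_charFun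
  ext t
  rw [charFun_apply, integral_map hmeas.aemeasurable (by fun_prop)]
  have hpt : ∀ p : E × ℝ,
      Complex.exp (⟪p.1 + (p.2 - ⟪u, p.1⟫) • u, t⟫ * Complex.I)
        = Complex.exp (⟪p.1, t - ⟪u, t⟫ • u⟫ * Complex.I)
          * Complex.exp (⟪u, t⟫ * p.2 * Complex.I) := by
    intro p
    rw [← Complex.exp_add, ← add_mul]
    congr 2
    rw [inner_add_left, inner_smul_left, inner_sub_right, inner_smul_right,
      real_inner_comm u p.1]
    push_cast
    simp
    ring
  rw [integral_congr_ae (Filter.Eventually.of_forall hpt),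
    integral_prod_mul (fun x => Complex.exp (⟪x, t - ⟪u, t⟫ • u⟫ * Complex.I))
      (fun g : ℝ => Complex.exp (⟪u, t⟫ * g * Complex.I)), ← charFun_apply, ← charFun_apply_real,
    charFun_stdGaussian, charFun_stdGaussian, charFun_gaussianReal, ← Complex.exp_add]
  congr 1
  have : ‖t - ⟪u, t⟫ • u‖ ^ 2 + ⟪u, t⟫ ^ 2 = ‖t‖ ^ 2 := by
    rw [norm_sub_sq_real, inner_smul_right, norm_smul, real_inner_comm]
    rcases hu with h | h
    · rw [h, mul_one, Real.norm_eq_abs, sq_abs]; ring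
    · simp [h]
  have h' : ((‖t‖ : ℂ)) ^ 2 = (‖t - ⟪u, t⟫ • u‖ : ℂ) ^ 2 + (⟪u, t⟫ : ℂ) ^ 2 := by
    exact_mod_cast this.symm
  rw [h']
  push_cast
  ring

/-- Integrating out the Gaussian component along `q` of a product of a weight which does not depend
on that component and a function of `⟪p + q, ·⟫`. -/
lemma lintegral_mul_comp_inner_le {p q : E} (hpq : ⟪p, q⟫ = 0) {w : E → ℝ≥0∞} (hw : Measurable w)
    (hwq : ∀ y (c : ℝ), w (y + c • q) = w y) {F : ℝ → ℝ≥0∞} (hF : Measurable F) {ρ : ℝ≥0∞}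
    (hρ : ∀ y, ∫⁻ g, F (⟪p, y⟫ + g * ‖q‖) ∂gaussianReal 0 1 ≤ ρ) :
    ∫⁻ y, w y * F ⟪p + q, y⟫ ∂stdGaussian E ≤ ρ * ∫⁻ y, w y ∂stdGaussian E := by
  set u : E := ‖q‖⁻¹ • q with hu
  have hunit : ‖u‖ = 1 ∨ u = 0 := by
    by_cases hq : q = 0
    · right; simp [hu, hq]
    · left; rw [hu, norm_smul, norm_inv, norm_norm, inv_mul_cancel₀ (norm_ne_zero_iff.2 hq)]
  have hqu : ‖q‖ • u = q := by
    by_cases hq : q = 0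
    · simp [hu, hq]
    · rw [hu, smul_smul, mul_inv_cancel₀ (norm_ne_zero_iff.2 hq), one_smul]
  have huq : ⟪q, u⟫ = ‖q‖ := by
    by_cases hq : q = 0
    · simp [hq]
    · rw [hu, inner_smul_right, real_inner_self_eq_norm_sq]
      have := norm_ne_zero_iff.2 hq
      field_simp
  have hpu : ⟪p, u⟫ = 0 := by rw [hu, inner_smul_right, hpq, mul_zero]
  rw [← stdGaussian_map_resample hunit, lintegral_map (by fun_prop) (by fun_prop),
    stdGaussian_map_resample hunit]
  have hpt : ∀ z : E × ℝ, w (z.1 + (z.2 - ⟪u, z.1⟫) • u)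
      * F ⟪p + q, z.1 + (z.2 - ⟪u, z.1⟫) • u⟫ = w z.1 * F (⟪p, z.1⟫ + z.2 * ‖q‖) := by
    intro z
    congr 1
    · rw [hu, smul_smul]; exact hwq _ _
    · congr 1
      have : ⟪q, z.1⟫ = ‖q‖ * ⟪u, z.1⟫ := by
        conv_lhs => rw [← hqu, real_inner_smul_left]
      rw [inner_add_left, inner_add_right, inner_add_right, real_inner_smul_right (x := p),
        real_inner_smul_right (x := q), hpu, huq, this]
      ring
  rw [lintegral_congr hpt, lintegral_prod _ (by fun_prop)]
  calc ∫⁻ y, ∫⁻ g, w y * F (⟪p, y⟫ + g * ‖q‖) ∂gaussianReal 0 1 ∂stdGaussian E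
      = ∫⁻ y, w y * ∫⁻ g, F (⟪p, y⟫ + g * ‖q‖) ∂gaussianReal 0 1 ∂stdGaussian E := by
        refine lintegral_congr fun y => ?_
        rw [lintegral_const_mul _ (by fun_prop)]
    _ ≤ ∫⁻ y, ρ * w y ∂stdGaussian E := by
        refine lintegral_mono fun y => ?_
        rw [mul_comm ρ]
        gcongr
        exact hρ _
    _ = _ := lintegral_const_mul _ hw

lemma lintegral_exp_sum_inner_sq_le {θ : ℝ} (hθ : θ < 1 / 2) {k : ℕ} {u : Fin k → E}
    (hu : Orthonormal ℝ u) :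
    ∫⁻ y, ENNReal.ofReal (Real.exp (θ * ∑ j, ⟪u j, y⟫ ^ 2)) ∂stdGaussian E
      ≤ ENNReal.ofReal (√(1 - 2 * θ))⁻¹ ^ k := by
  induction k with
  | zero => simp
  | succ k ih =>
    have hu' : Orthonormal ℝ (fun j : Fin k => u j.castSucc) :=
      hu.comp _ (Fin.castSucc_injective k)
    have hpt : ∀ y, ENNReal.ofReal (Real.exp (θ * ∑ j, ⟪u j, y⟫ ^ 2))
        = ENNReal.ofReal (Real.exp (θ * ∑ j : Fin k, ⟪u j.castSucc, y⟫ ^ 2))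
          * ENNReal.ofReal (Real.exp (θ * ⟪0 + u (Fin.last k), y⟫ ^ 2)) := by
      intro y
      rw [← ENNReal.ofReal_mul (by positivity), ← Real.exp_add, Fin.sum_univ_castSucc, mul_add,
        zero_add]
    rw [lintegral_congr hpt, pow_succ']
    refine (lintegral_mul_comp_inner_le (E := E) (p := 0) (q := u (Fin.last k))
      (w := fun y => ENNReal.ofReal (Real.exp (θ * ∑ j : Fin k, ⟪u j.castSucc, y⟫ ^ 2)))
      (F := fun r => ENNReal.ofReal (Real.exp (θ * r ^ 2))) (ρ := ENNReal.ofReal (√(1 - 2 * θ))⁻¹)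
      (by simp) (by fun_prop) ?_ (by fun_prop) ?_).trans ?_
    · intro y c
      congr 4
      ext j
      rw [inner_add_right, inner_smul_right, hu.2 (Fin.castSucc_lt_last j).ne, mul_zero, add_zero]
    · intro y
      rw [hu.1]
      simp only [inner_zero_left, zero_add, mul_one]
      exact (lintegral_exp_mul_sq_gaussianReal hθ).le
    · gcongr
      exact ih hu'

lemma lintegral_exp_norm_starProjection_sq_le {θ : ℝ} (hθ : θ < 1 / 2) (V : Submodule ℝ E) :
    ∫⁻ y, ENNReal.ofReal (Real.exp (θ * ‖V.starProjection y‖ ^ 2)) ∂stdGaussian E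
      ≤ ENNReal.ofReal (√(1 - 2 * θ))⁻¹ ^ finrank ℝ V := by
  let b := stdOrthonormalBasis ℝ V
  have hb : Orthonormal ℝ (fun j => (b j : E)) :=
    b.orthonormal.comp_linearIsometry V.subtypeₗᵢ
  refine le_trans (le_of_eq (lintegral_congr fun y => ?_)) (lintegral_exp_sum_inner_sq_le hθ hb)
  have h1 : ‖V.starProjection y‖ ^ 2 = ‖V.orthogonalProjectionOnto y‖ ^ 2 := rfl
  rw [h1, ← b.sum_sq_norm_inner_right]
  congr 4
  ext j
  rw [Real.norm_eq_abs, sq_abs]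
  simp

/-- Chernoff bound for the norm of the projection of a standard Gaussian vector. -/
lemma stdGaussian_le_norm_starProjection_sq {θ : ℝ} (hθ0 : 0 < θ) (hθ : θ < 1 / 2)
    (V : Submodule ℝ E) (R : ℝ) :
    stdGaussian E {y | R ≤ ‖V.starProjection y‖ ^ 2}
      ≤ ENNReal.ofReal ((√(1 - 2 * θ))⁻¹ ^ finrank ℝ V * Real.exp (-(θ * R))) := by
  have h := (mul_meas_ge_le_lintegral (μ := stdGaussian E)
    (f := fun y => ENNReal.ofReal (Real.exp (θ * ‖V.starProjection y‖ ^ 2))) (by fun_prop)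
    (ENNReal.ofReal (Real.exp (θ * R)))).trans (lintegral_exp_norm_starProjection_sq_le hθ V)
  have hset : {y : E | ENNReal.ofReal (Real.exp (θ * R))
      ≤ ENNReal.ofReal (Real.exp (θ * ‖V.starProjection y‖ ^ 2))}
      = {y | R ≤ ‖V.starProjection y‖ ^ 2} := by
    ext y
    simp only [Set.mem_ofPred_eq]
    rw [ENNReal.ofReal_le_ofReal_iff (by positivity), Real.exp_le_exp,
      mul_le_mul_iff_right₀ hθ0]
  rw [hset] at h
  rw [ENNReal.ofReal_mul (by positivity), ENNReal.ofReal_pow (by positivity), Real.exp_neg,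
    ENNReal.ofReal_inv_of_pos (Real.exp_pos _), ← div_eq_mul_inv,
    ENNReal.le_div_iff_mul_le (by simp [Real.exp_pos]) (by simp), mul_comm]
  exact h

end

/-- A shifted hyperbolic cosine of a Gaussian has a Laplace transform dominated, uniformly in the
shift, by the second-order expansion at zero shift. -/
lemma lintegral_exp_neg_mul_cosh_le {l : ℝ} (hl : 0 ≤ l) (a b : ℝ) :
    ∫⁻ g, ENNReal.ofReal (Real.exp (-(l * Real.cosh (b + a * g)))) ∂gaussianReal 0 1
      ≤ ENNReal.ofReal (Real.exp (-(l * Real.exp (a ^ 2 / 2))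
          + l ^ 2 * Real.exp (2 * a ^ 2) / 2)) := by
  have hexp : ∀ d e : ℝ, Integrable (fun g => Real.exp (e + d * g)) (gaussianReal 0 1) := by
    intro d e
    simp_rw [Real.exp_add]
    exact (integrable_exp_mul_gaussianReal d).const_mul _
  have hmgf : ∀ d e : ℝ, ∫ g, Real.exp (e + d * g) ∂gaussianReal 0 1
      = Real.exp e * Real.exp (d ^ 2 / 2) := by
    intro d e
    simp_rw [Real.exp_add]
    rw [integral_const_mul]
    have := congrFun (mgf_fun_id_gaussianReal (μ := 0) (v := 1)) d
    simp only [mgf] at this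
    rw [this]
    simp
  have hcoshI : ∀ d e : ℝ, Integrable (fun g => Real.cosh (e + d * g)) (gaussianReal 0 1) := by
    intro d e
    simp_rw [Real.cosh_eq]
    refine ((hexp d e).add ?_).div_const 2
    refine (hexp (-d) (-e)).congr (Filter.Eventually.of_forall fun g => ?_)
    simp only
    congr 1
    ring
  have hcosh : ∀ d e : ℝ, ∫ g, Real.cosh (e + d * g) ∂gaussianReal 0 1
      = Real.cosh e * Real.exp (d ^ 2 / 2) := by
    intro d e
    have h1 : ∀ g, Real.cosh (e + d * g)
        = (Real.exp (e + d * g) + Real.exp (-e + (-d) * g)) / 2 := by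
      intro g; rw [Real.cosh_eq]; congr 3; ring
    simp_rw [h1]
    rw [integral_div, integral_add (hexp _ _) (hexp _ _), hmgf, hmgf, Real.cosh_eq e, neg_sq]
    ring
  set C := Real.cosh b with hC
  have hC1 : 1 ≤ C := Real.one_le_cosh b
  have hC0 : 0 < C := by linarith
  set f : ℝ → ℝ := fun g => 1 - l / C * Real.cosh (b + a * g)
    + (l / C) ^ 2 / 4 * (Real.cosh (2 * b + 2 * a * g) + 1) with hf
  have hfI : Integrable f (gaussianReal 0 1) :=
    ((integrable_const 1).sub ((hcoshI a b).const_mul _)).add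
      (((hcoshI (2 * a) (2 * b)).add (integrable_const 1)).const_mul _)
  have hle : ∀ g, Real.exp (-(l * Real.cosh (b + a * g))) ≤ f g := by
    intro g
    set X := Real.cosh (b + a * g) with hX
    have hX0 : 0 < X := Real.cosh_pos _
    have h2 : Real.cosh (2 * b + 2 * a * g) = 2 * X ^ 2 - 1 := by
      rw [show 2 * b + 2 * a * g = 2 * (b + a * g) by ring, Real.cosh_two_mul, Real.sinh_sq]
      ring
    have h3 : l / C * X ≤ l * X := by
      gcongr
      exact div_le_self hl hC1
    have h4 : 0 ≤ l / C * X := by positivity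
    have h5 : Real.exp (-(l / C * X)) ≤ 1 - l / C * X + (l / C * X) ^ 2 / 2 := by
      rw [Real.exp_neg, inv_le_iff_one_le_mul₀ (Real.exp_pos _)]
      have h6 := Real.quadratic_le_exp_of_nonneg h4
      have h7 : 0 ≤ 1 - l / C * X + (l / C * X) ^ 2 / 2 := by nlinarith [sq_nonneg (l / C * X - 1)]
      nlinarith [mul_le_mul_of_nonneg_left h6 h7, sq_nonneg ((l / C * X) ^ 2)]
    calc Real.exp (-(l * X)) ≤ Real.exp (-(l / C * X)) := by gcongr
      _ ≤ _ := h5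
      _ = f g := by simp only [hf, h2]; ring
  have hf0 : ∀ g, 0 ≤ f g := fun g => (Real.exp_pos _).le.trans (hle g)
  calc ∫⁻ g, ENNReal.ofReal (Real.exp (-(l * Real.cosh (b + a * g)))) ∂gaussianReal 0 1
      ≤ ∫⁻ g, ENNReal.ofReal (f g) ∂gaussianReal 0 1 :=
        lintegral_mono fun g => ENNReal.ofReal_le_ofReal (hle g)
    _ = ENNReal.ofReal (∫ g, f g ∂gaussianReal 0 1) :=
        (ofReal_integral_eq_lintegral_ofReal hfI (Filter.Eventually.of_forall hf0)).symm
    _ ≤ _ := by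
        apply ENNReal.ofReal_le_ofReal
        have hval : ∫ g, f g ∂gaussianReal 0 1 = 1 - l * Real.exp (a ^ 2 / 2)
            + (l / C) ^ 2 / 4 * (Real.cosh (2 * b) * Real.exp (2 * a ^ 2) + 1) := by
          simp only [hf]
          rw [integral_add, integral_sub, integral_const_mul, integral_const_mul, integral_add,
            hcosh, hcosh]
          · simp only [integral_const, probReal_univ, smul_eq_mul, ← hC]
            rw [show (2 * a) ^ 2 / 2 = 2 * a ^ 2 by ring]
            field_simp
          · exact hcoshI _ _
          · exact integrable_const _
          · exact integrable_const _
          · exact (hcoshI _ _).const_mul _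
          · exact (integrable_const 1).sub ((hcoshI a b).const_mul _)
          · exact ((hcoshI (2 * a) (2 * b)).add (integrable_const 1)).const_mul _
        rw [hval]
        have h2 : Real.cosh (2 * b) = 2 * C ^ 2 - 1 := by
          rw [Real.cosh_two_mul, Real.sinh_sq]; ring
        have h3 : (1 : ℝ) ≤ Real.exp (2 * a ^ 2) := Real.one_le_exp (by positivity)
        have h4 : (l / C) ^ 2 / 4 * (Real.cosh (2 * b) * Real.exp (2 * a ^ 2) + 1)
            ≤ l ^ 2 * Real.exp (2 * a ^ 2) / 2 := by
          have : (l / C) ^ 2 / 4 * (Real.cosh (2 * b) * Real.exp (2 * a ^ 2) + 1)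
              ≤ (l / C) ^ 2 / 4 * (2 * C ^ 2 * Real.exp (2 * a ^ 2)) := by
            gcongr
            rw [h2]
            linarith
          refine this.trans (le_of_eq ?_)
          field_simp
          ring
        have h5 := Real.add_one_le_exp (-(l * Real.exp (a ^ 2 / 2))
          + l ^ 2 * Real.exp (2 * a ^ 2) / 2)
        linarith

/-- Jensen's inequality for `exp (-·)`, for a measure of arbitrary finite total mass. -/
lemma ofReal_exp_neg_mul_measure_univ_le {α : Type*} [MeasurableSpace α] {ν : Measure α}
    [IsFiniteMeasure ν] {f : α → ℝ} (hf : Measurable f) (hf0 : ∀ a, 0 ≤ f a) {u : ℝ} (hu : 0 ≤ u)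
    (h : ∫⁻ a, ENNReal.ofReal (f a) ∂ν ≤ ENNReal.ofReal u * ν Set.univ) :
    ENNReal.ofReal (Real.exp (-u)) * ν Set.univ
      ≤ ∫⁻ a, ENNReal.ofReal (Real.exp (-f a)) ∂ν := by
  have hpt : ∀ a, ENNReal.ofReal (Real.exp (-u) * (1 + u))
      ≤ ENNReal.ofReal (Real.exp (-f a)) + ENNReal.ofReal (Real.exp (-u)) * ENNReal.ofReal (f a) := by
    intro a
    rw [← ENNReal.ofReal_mul (by positivity),
      ← ENNReal.ofReal_add (by positivity) (mul_nonneg (by positivity) (hf0 a))]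
    apply ENNReal.ofReal_le_ofReal
    have h1 := Real.add_one_le_exp (u - f a)
    have h2 : Real.exp (-f a) = Real.exp (-u) * Real.exp (u - f a) := by
      rw [← Real.exp_add]; ring_nf
    rw [h2]
    nlinarith [Real.exp_pos (-u)]
  have h1 := lintegral_mono (μ := ν) hpt
  rw [lintegral_const, lintegral_add_left (by fun_prop), lintegral_const_mul _ (by fun_prop)] at h1
  have h2 : ENNReal.ofReal (Real.exp (-u)) * ν Set.univ
      + ENNReal.ofReal (Real.exp (-u)) * (ENNReal.ofReal u * ν Set.univ)
      ≤ ∫⁻ a, ENNReal.ofReal (Real.exp (-f a)) ∂ν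
        + ENNReal.ofReal (Real.exp (-u)) * (ENNReal.ofReal u * ν Set.univ) := by
    calc _ = ENNReal.ofReal (Real.exp (-u) * (1 + u)) * ν Set.univ := by
          rw [ENNReal.ofReal_mul (by positivity), ENNReal.ofReal_add zero_le_one hu,
            ENNReal.ofReal_one]
          ring
      _ ≤ _ := h1
      _ ≤ _ := by gcongr
  exact (ENNReal.add_le_add_iff_right (by finiteness)).1 h2

section

variable {E : Type*} [NormedAddCommGroup E] [InnerProductSpace ℝ E]

/-- A lower bound, valid for `‖y‖² ≤ (1 + τ) n`, for the part of the density of correlated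
Gaussian vectors that does not depend on `⟪x, y⟫`. -/
noncomputable def coshWeight (η τ : ℝ) (x : E) : ℝ :=
  Real.exp (η ^ 2 * finrank ℝ E / 2 - η ^ 2 * ((1 + τ) * finrank ℝ E) / (2 * (1 - η ^ 2))
    - η ^ 2 * ‖x‖ ^ 2 / (2 * (1 - η ^ 2)))

lemma coshWeight_mul_exp_bounds {c ε τ η v q : ℝ} {x : E} (hτ : 0 < τ) (hτ1 : τ ≤ 1)
    (hτε : 3 * τ * c ^ 2 ≤ ε / 2) (hηn : η ^ 2 * finrank ℝ E ≤ c ^ 2) (hητ : η ^ 2 ≤ τ)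
    (hη2 : η ^ 2 ≤ 1 / 2) (hsq : ‖x‖ ^ 2 = v + q ^ 2) (hv0 : 0 ≤ v) (hv : v ≤ τ * finrank ℝ E)
    (hx : ‖x‖ ^ 2 ≤ (1 + τ) * finrank ℝ E) :
    1 - ε / 2 ≤ coshWeight η τ x * Real.exp ((η / (1 - η ^ 2) * q) ^ 2 / 2) ∧
      coshWeight η τ x ^ 2 * Real.exp (2 * (η / (1 - η ^ 2) * q) ^ 2)
        ≤ Real.exp (16 * c ^ 2) := by
  have h1η0 : 0 < 1 - η ^ 2 := by linarith
  set M : ℝ := η ^ 2 * finrank ℝ E with hM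
  have hM0 : 0 ≤ M := by positivity
  set d := (1 - η ^ 2)⁻¹ with hd
  have hinv : d ≤ 2 := by
    rw [hd, inv_le_comm₀ h1η0 (by norm_num)]; linarith
  have hinv1 : 1 ≤ d := by
    rw [hd, one_le_inv₀ h1η0]; linarith [sq_nonneg η]
  have hd0 : 0 ≤ d := by linarith
  have hdD : η ^ 2 * d = d - 1 := by
    rw [hd]; field_simp; ring
  have hweight : coshWeight η τ x
      = Real.exp (M / 2 - (1 + τ) * M * d / 2 - η ^ 2 * ‖x‖ ^ 2 * d / 2) := by
    rw [coshWeight, hM, hd]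
    congr 1
    field_simp
  have htq : (η / (1 - η ^ 2) * q) ^ 2 = η ^ 2 * q ^ 2 * d ^ 2 := by
    rw [hd]; field_simp
  rw [hweight, htq]
  have hηx : η ^ 2 * ‖x‖ ^ 2 = η ^ 2 * v + η ^ 2 * q ^ 2 := by
    rw [hsq]; ring
  have hηv : η ^ 2 * v ≤ τ * M := by
    have := mul_le_mul_of_nonneg_left hv (sq_nonneg η)
    rw [hM]; linarith
  have hτM : τ * M ≤ M := mul_le_of_le_one_left hM0 hτ1
  have hηx2 : η ^ 2 * ‖x‖ ^ 2 ≤ (1 + τ) * M := by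
    have := mul_le_mul_of_nonneg_left hx (sq_nonneg η)
    rw [hM]; linarith
  have hqx : η ^ 2 * q ^ 2 ≤ 2 * M := by linarith [mul_nonneg (sq_nonneg η) hv0]
  constructor
  · rw [← Real.exp_add]
    have hX : -(ε / 2) ≤ M / 2 - (1 + τ) * M * d / 2 - η ^ 2 * ‖x‖ ^ 2 * d / 2
        + η ^ 2 * q ^ 2 * d ^ 2 / 2 := by
      have h1 : η ^ 2 * q ^ 2 * d ≤ η ^ 2 * q ^ 2 * d ^ 2 := by
        gcongr; exact le_self_pow₀ hinv1 two_ne_zero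
      have h2 : η ^ 2 * ‖x‖ ^ 2 * d ≤ (τ * M + η ^ 2 * q ^ 2) * d := by
        gcongr; linarith
      have h3 : M * (d - 1) ≤ M * (τ * 2) := by
        rw [← hdD]; gcongr
      have h4 : τ * M * d ≤ τ * M * 2 := by gcongr
      have h5 : τ * M ≤ τ * c ^ 2 := by gcongr
      linarith
    have := Real.add_one_le_exp (-(ε / 2))
    have := Real.exp_le_exp.2 hX
    linarith
  · rw [← Real.exp_nat_mul, ← Real.exp_add]
    apply Real.exp_le_exp.2
    have h1 : M ≤ (1 + τ) * M * d := by
      have : M * 1 ≤ (1 + τ) * M * d := by gcongr; linarith [mul_nonneg hτ.le hM0]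
      linarith
    have h2 : 0 ≤ η ^ 2 * ‖x‖ ^ 2 * d := by positivity
    have h3 : η ^ 2 * q ^ 2 * d ^ 2 ≤ 2 * M * 2 ^ 2 := by gcongr
    push_cast
    linarith

end

section

variable {E : Type*} [NormedAddCommGroup E] [InnerProductSpace ℝ E] [FiniteDimensional ℝ E]
  [MeasurableSpace E] [BorelSpace E]

/-- Greedy selection of vectors whose associated ridge functions behave, for an upper bound on the
integral of their product, as if they were independent. -/
lemma exists_list_lintegral_prod_le {A : Set E} {k : ℕ} {F : E → ℝ → ℝ≥0∞}
    (hF : ∀ x, Measurable (F x)) {ρ : ℝ≥0∞}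
    (hA : ∀ V : Submodule ℝ E, finrank ℝ V ≤ k →
      ∃ x ∈ A, ∀ m : ℝ, ∫⁻ g, F x (m + g * ‖Vᗮ.starProjection x‖) ∂gaussianReal 0 1 ≤ ρ)
    {i : ℕ} (hi : i ≤ k) :
    ∃ l : List E, l.length = i ∧ (∀ x ∈ l, x ∈ A) ∧
      ∫⁻ y, (l.map fun x => F x ⟪x, y⟫).prod ∂stdGaussian E ≤ ρ ^ i := by
  classical
  have hwm : ∀ l : List E, Measurable fun y => (l.map fun x => F x ⟪x, y⟫).prod := by
    intro l
    induction l with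
    | nil => simp
    | cons a l ihl =>
      simp only [List.map_cons, List.prod_cons]
      exact ((hF a).comp (by fun_prop)).mul ihl
  induction i with
  | zero => exact ⟨[], by simp⟩
  | succ i ih =>
    obtain ⟨l, hl, hlA, hbound⟩ := ih (by omega)
    set V : Submodule ℝ E := Submodule.span ℝ (l.toFinset : Set E) with hV
    have hVk : finrank ℝ V ≤ k := by
      have h1 : finrank ℝ V ≤ l.toFinset.card := finrank_span_finset_le_card l.toFinset
      have h2 := List.toFinset_card_le l
      omega
    obtain ⟨x, hxA, hx⟩ := hA V hVk
    refine ⟨x :: l, by simp [hl], by simpa using ⟨hxA, hlA⟩, ?_⟩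
    have hpq : V.starProjection x + Vᗮ.starProjection x = x :=
      V.starProjection_add_starProjection_orthogonal x
    have hqV : Vᗮ.starProjection x ∈ Vᗮ := Submodule.starProjection_apply_mem _ _
    have hmain := lintegral_mul_comp_inner_le (E := E) (p := V.starProjection x)
      (q := Vᗮ.starProjection x) (w := fun y => (l.map fun x => F x ⟪x, y⟫).prod)
      (F := F x) (ρ := ρ)
      (Submodule.inner_right_of_mem_orthogonal (Submodule.starProjection_apply_mem _ _) hqV)
      (hwm l) ?_ (hF x) (fun y => hx _)
    · rw [hpq] at hmain
      simp only [List.map_cons, List.prod_cons]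
      rw [pow_succ']
      refine le_trans (le_of_eq (lintegral_congr fun y => mul_comm _ _)) (hmain.trans ?_)
      gcongr
    · intro y d
      refine congrArg _ (List.map_congr_left fun x' hx' => ?_)
      have hx'V : x' ∈ V := Submodule.subset_span (by simpa using hx')
      rw [inner_add_right, inner_smul_right,
        Submodule.inner_right_of_mem_orthogonal hx'V hqV, mul_zero, add_zero]

/-- If the average of `κ x * cosh (t ⟪x, ·⟫ - s)` over `B` is small for all `x` in a set `A` that
contains vectors far from every low-dimensional subspace, then `B` is small. -/
lemma stdGaussian_le_of_forall_average_cosh_le {A B : Set E} {k : ℕ} {κ : E → ℝ}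
    (hκ : ∀ x, 0 ≤ κ x) {t s L Q r l : ℝ} (hl : 0 ≤ l) (hr : 0 ≤ r)
    (hA : ∀ V : Submodule ℝ E, finrank ℝ V ≤ k → ∃ x ∈ A,
      L ≤ κ x * Real.exp ((t * ‖Vᗮ.starProjection x‖) ^ 2 / 2) ∧
      κ x ^ 2 * Real.exp (2 * (t * ‖Vᗮ.starProjection x‖) ^ 2) ≤ Q)
    (hB : ∀ x ∈ A, ∫⁻ y in B, ENNReal.ofReal (κ x * Real.cosh (t * ⟪x, y⟫ - s)) ∂stdGaussian E
      ≤ ENNReal.ofReal r * stdGaussian E B) :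
    stdGaussian E B ≤ ENNReal.ofReal (Real.exp (-(k * (l * (L - r) - l ^ 2 * Q / 2)))) := by
  obtain ⟨xs, hlen, hxs, hbound⟩ := exists_list_lintegral_prod_le (E := E) (A := A) (k := k)
    (F := fun x z => ENNReal.ofReal (Real.exp (-(l * κ x * Real.cosh (t * z - s)))))
    (ρ := ENNReal.ofReal (Real.exp (-(l * L) + l ^ 2 * Q / 2)))
    (fun x => by fun_prop) (fun V hV => by
      obtain ⟨x, hx, h1, h2⟩ := hA V hV
      refine ⟨x, hx, fun m => ?_⟩
      have h := lintegral_exp_neg_mul_cosh_le (mul_nonneg hl (hκ x))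
        (t * ‖Vᗮ.starProjection x‖) (t * m - s)
      refine le_trans (le_of_eq (lintegral_congr fun g => ?_))
        (h.trans (ENNReal.ofReal_le_ofReal (Real.exp_le_exp.2 ?_)))
      · congr 5; ring
      · have h3 := mul_le_mul_of_nonneg_left h1 hl
        have h4 := mul_le_mul_of_nonneg_left h2 (sq_nonneg l)
        nlinarith) le_rfl
  set f : E → ℝ := fun y => (xs.map fun x => l * κ x * Real.cosh (t * ⟪x, y⟫ - s)).sum with hf
  have hprod : ∀ y, (xs.map fun x =>
      ENNReal.ofReal (Real.exp (-(l * κ x * Real.cosh (t * ⟪x, y⟫ - s))))).prod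
      = ENNReal.ofReal (Real.exp (-f y)) := by
    intro y
    simp only [hf]
    clear hf f hbound hxs hlen
    induction xs with
    | nil => simp
    | cons a xs ih =>
      simp only [List.map_cons, List.prod_cons, List.sum_cons, ih]
      rw [← ENNReal.ofReal_mul (by positivity), ← Real.exp_add]
      congr 2
      ring
  have hfm : Measurable f := by
    simp only [hf]
    clear hf f hbound hxs hlen hprod
    induction xs with
    | nil => simp
    | cons a xs ih => simp only [List.map_cons, List.sum_cons]; fun_prop
  have hf0 : ∀ y, 0 ≤ f y := fun y => List.sum_nonneg fun z hz => by
    obtain ⟨x, -, rfl⟩ := List.mem_map.1 hz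
    have := hκ x
    have := Real.cosh_pos (t * ⟪x, y⟫ - s)
    positivity
  have hfint : ∫⁻ y in B, ENNReal.ofReal (f y) ∂stdGaussian E
      ≤ ENNReal.ofReal (k * l * r) * stdGaussian E B := by
    rw [← hlen]
    simp only [hf]
    clear hf f hbound hlen hprod hfm hf0
    induction xs with
    | nil => simp
    | cons a xs ih =>
      have hsum : ∀ y, 0 ≤ (xs.map fun x => l * κ x * Real.cosh (t * ⟪x, y⟫ - s)).sum :=
        fun y => List.sum_nonneg fun z hz => by
          obtain ⟨x, -, rfl⟩ := List.mem_map.1 hz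
          have := hκ x
          have := Real.cosh_pos (t * ⟪x, y⟫ - s)
          positivity
      have hpt : ∀ y, ENNReal.ofReal
          ((a :: xs).map fun x => l * κ x * Real.cosh (t * ⟪x, y⟫ - s)).sum
          = ENNReal.ofReal l * ENNReal.ofReal (κ a * Real.cosh (t * ⟪a, y⟫ - s))
            + ENNReal.ofReal (xs.map fun x => l * κ x * Real.cosh (t * ⟪x, y⟫ - s)).sum := by
        intro y
        have := hκ a
        have := Real.cosh_pos (t * ⟪a, y⟫ - s)
        rw [List.map_cons, List.sum_cons, ENNReal.ofReal_add (by positivity) (hsum y),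
          mul_assoc, ENNReal.ofReal_mul hl]
      rw [lintegral_congr hpt, lintegral_add_left (by fun_prop), lintegral_const_mul _ (by fun_prop)]
      have h1 := hB a (hxs a (by simp))
      have h2 := ih fun x hx => hxs x (by simp [hx])
      calc _ ≤ ENNReal.ofReal l * (ENNReal.ofReal r * stdGaussian E B)
            + ENNReal.ofReal (xs.length * l * r) * stdGaussian E B := by gcongr
        _ = _ := by
          rw [← mul_assoc, ← ENNReal.ofReal_mul hl, ← add_mul,
            ← ENNReal.ofReal_add (by positivity) (by positivity)]
          congr 2
          simp only [List.length_cons]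
          push_cast
          ring
  have hJ := ofReal_exp_neg_mul_measure_univ_le (ν := (stdGaussian E).restrict B) hfm hf0
    (u := k * l * r) (by positivity) (by simpa using hfint)
  rw [Measure.restrict_apply_univ] at hJ
  have hle : ENNReal.ofReal (Real.exp (-(k * l * r))) * stdGaussian E B
      ≤ ENNReal.ofReal (Real.exp (-(l * L) + l ^ 2 * Q / 2)) ^ k := by
    refine hJ.trans (le_trans (setLIntegral_le_lintegral _ _) ?_)
    rwa [← lintegral_congr hprod]
  rw [← ENNReal.ofReal_pow (by positivity), ← Real.exp_nat_mul] at hle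
  have hone : ENNReal.ofReal (Real.exp (k * l * r)) * ENNReal.ofReal (Real.exp (-(k * l * r)))
      = 1 := by
    rw [← ENNReal.ofReal_mul (by positivity), ← Real.exp_add]; simp
  calc stdGaussian E B = ENNReal.ofReal (Real.exp (k * l * r))
        * (ENNReal.ofReal (Real.exp (-(k * l * r))) * stdGaussian E B) := by
        rw [← mul_assoc, hone, one_mul]
    _ ≤ ENNReal.ofReal (Real.exp (k * l * r))
        * ENNReal.ofReal (Real.exp (k * (-(l * L) + l ^ 2 * Q / 2))) := by gcongr
    _ = _ := by
        rw [← ENNReal.ofReal_mul (by positivity), ← Real.exp_add]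
        congr 2
        ring

/-- For all but exponentially few `x`, the average over a large set `B` of the weighted hyperbolic
cosine of `⟪x, ·⟫` is almost at least one. -/
lemma stdGaussian_average_cosh_le {c ε τ η s : ℝ} {k : ℕ} {B : Set E}
    (hε : 0 < ε) (hε1 : ε < 1) (hτ : 0 < τ) (hτ1 : τ ≤ 1) (hτε : 3 * τ * c ^ 2 ≤ ε / 2)
    (hηn : η ^ 2 * finrank ℝ E ≤ c ^ 2) (hητ : η ^ 2 ≤ τ) (hη2 : η ^ 2 ≤ 1 / 2)
    (hk : k ≤ τ * finrank ℝ E / 4)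
    (hB : ENNReal.ofReal (Real.exp (-(k * (ε ^ 2 / (8 * Real.exp (16 * c ^ 2))))))
      < stdGaussian E B) :
    stdGaussian E {x | ‖x‖ ^ 2 < (1 + τ) * finrank ℝ E ∧
      ∫⁻ y in B, ENNReal.ofReal (coshWeight η τ x * Real.cosh (η / (1 - η ^ 2) * ⟪x, y⟫ - s))
        ∂stdGaussian E ≤ ENNReal.ofReal (1 - ε) * stdGaussian E B}
      ≤ ENNReal.ofReal (Real.exp (-(τ * finrank ℝ E / 8))) := by
  set n : ℝ := ((finrank ℝ E : ℕ) : ℝ) with hn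
  have hn0 : 0 ≤ n := by positivity
  set Q := Real.exp (16 * c ^ 2) with hQ
  have hQ0 : 0 < Q := Real.exp_pos _
  have h1η : 1 / 2 ≤ 1 - η ^ 2 := by linarith
  have h1η0 : 0 < 1 - η ^ 2 := by linarith
  set S : Set E := {x | ‖x‖ ^ 2 < (1 + τ) * n ∧
    ∫⁻ y in B, ENNReal.ofReal (coshWeight η τ x * Real.cosh (η / (1 - η ^ 2) * ⟪x, y⟫ - s))
      ∂stdGaussian E ≤ ENNReal.ofReal (1 - ε) * stdGaussian E B}
  by_contra! hlt
  refine absurd (stdGaussian_le_of_forall_average_cosh_le (E := E) (A := S) (k := k)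
    (κ := coshWeight η τ) (t := η / (1 - η ^ 2)) (s := s) (L := 1 - ε / 2) (Q := Q) (r := 1 - ε)
    (l := ε / (2 * Q)) (B := B) (fun x => (Real.exp_pos _).le) (by positivity) (by linarith)
    ?_ fun x hx => hx.2) (not_le.2 (lt_of_le_of_lt (le_of_eq ?_) hB))
  · intro V hV
    have htail : stdGaussian E {x | τ * n ≤ ‖V.starProjection x‖ ^ 2}
        ≤ ENNReal.ofReal (Real.exp (-(τ * n / 8))) := by
      refine (stdGaussian_le_norm_starProjection_sq (θ := 1 / 4) (by norm_num) (by norm_num) V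
        (τ * n)).trans (ENNReal.ofReal_le_ofReal ?_)
      have h1 : (√(1 - 2 * (1 / 4 : ℝ)))⁻¹ ≤ Real.exp (1 / 2) := by
        rw [← Real.sqrt_inv, Real.exp_half]
        apply Real.sqrt_le_sqrt
        have := Real.exp_one_gt_d9
        norm_num
        linarith
      have h2 : (√(1 - 2 * (1 / 4 : ℝ)))⁻¹ ^ finrank ℝ V ≤ Real.exp (τ * n / 8) := by
        calc _ ≤ Real.exp (1 / 2) ^ finrank ℝ V := by gcongr
          _ = Real.exp (finrank ℝ V * (1 / 2)) := by rw [← Real.exp_nat_mul]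
          _ ≤ _ := by
            have : (finrank ℝ V : ℝ) ≤ k := by exact_mod_cast hV
            gcongr
            linarith
      calc _ ≤ Real.exp (τ * n / 8) * Real.exp (-(1 / 4 * (τ * n))) := by gcongr
        _ = _ := by rw [← Real.exp_add]; ring_nf
    obtain ⟨x, hx, hxV⟩ := Set.not_subset.1
      fun hsub => absurd ((measure_mono hsub).trans htail) (not_le.2 hlt)
    refine ⟨x, hx, ?_⟩
    have hxV' : ‖V.starProjection x‖ ^ 2 < τ * n := not_le.1 hxV
    have hx1 : ‖x‖ ^ 2 < (1 + τ) * n := hx.1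
    have hsq := Submodule.norm_sq_eq_add_norm_sq_starProjection x V
    exact coshWeight_mul_exp_bounds hτ hτ1 hτε hηn hητ hη2 hsq (sq_nonneg _) hxV'.le hx1.le
  · congr 3
    field_simp
    ring

end

section

variable {E : Type*} [NormedAddCommGroup E] [InnerProductSpace ℝ E] [FiniteDimensional ℝ E]
  [MeasurableSpace E] [BorelSpace E]

lemma stdGaussian_le_norm_sq {τ : ℝ} (hτ : 0 < τ) (hτ1 : τ ≤ 1) :
    stdGaussian E {y | (1 + τ) * finrank ℝ E ≤ ‖y‖ ^ 2}
      ≤ ENNReal.ofReal (Real.exp (-(τ ^ 2 * finrank ℝ E / 8))) := by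
  have h := stdGaussian_le_norm_starProjection_sq (E := E) (θ := τ / 4) (by positivity)
    (by linarith) ⊤ ((1 + τ) * finrank ℝ E)
  simp only [Submodule.starProjection_top, ContinuousLinearMap.id_apply, finrank_top] at h
  refine h.trans (ENNReal.ofReal_le_ofReal ?_)
  set u := τ / 2 with hu
  have hu0 : 0 < u := by positivity
  have hu1 : u ≤ 1 / 2 := by linarith
  have h1 : (√(1 - 2 * (τ / 4)))⁻¹ ≤ Real.exp ((u + u ^ 2) / 2) := by
    rw [← Real.sqrt_inv, Real.exp_half]
    apply Real.sqrt_le_sqrt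
    rw [show 1 - 2 * (τ / 4) = 1 - u by rw [hu]; ring]
    refine le_trans ?_ (Real.quadratic_le_exp_of_nonneg (by positivity : 0 ≤ u + u ^ 2))
    rw [inv_le_iff_one_le_mul₀ (by linarith)]
    have h2 : 0 ≤ 1 - u - u ^ 2 - u ^ 3 := by nlinarith [mul_pos hu0 hu0]
    nlinarith [mul_nonneg (sq_nonneg u) h2]
  calc _ ≤ Real.exp ((u + u ^ 2) / 2) ^ finrank ℝ E
        * Real.exp (-(τ / 4 * ((1 + τ) * finrank ℝ E))) := by gcongr
    _ = _ := by
      rw [← Real.exp_nat_mul, ← Real.exp_add, hu]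
      congr 1
      ring

theorem le_lintegral_coshWeight {c ε τ η s p : ℝ} {k : ℕ} {A B : Set E}
    (hε : 0 < ε) (hε1 : ε < 1) (hτ : 0 < τ) (hτ1 : τ ≤ 1)
    (hτε : 3 * τ * c ^ 2 ≤ ε / 2) (hηn : η ^ 2 * finrank ℝ E ≤ c ^ 2) (hητ : η ^ 2 ≤ τ)
    (hη2 : η ^ 2 ≤ 1 / 2) (hk : k ≤ τ * finrank ℝ E / 4)
    (hpA : p ≤ (stdGaussian E).real A) (hpB : p ≤ (stdGaussian E).real B)
    (hp1 : Real.exp (-(τ * finrank ℝ E / 8)) ≤ ε * p / 2)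
    (hp2 : Real.exp (-(τ ^ 2 * finrank ℝ E / 8)) ≤ ε * p / 2)
    (hp3 : Real.exp (-(k * (ε ^ 2 / (8 * Real.exp (16 * c ^ 2))))) < (1 - ε) * p) :
    ENNReal.ofReal ((1 - ε) ^ 3 * (stdGaussian E).real A * (stdGaussian E).real B)
      ≤ ∫⁻ x in A, ∫⁻ y in B ∩ {y | ‖y‖ ^ 2 < (1 + τ) * finrank ℝ E},
          ENNReal.ofReal (coshWeight η τ x * Real.cosh (η / (1 - η ^ 2) * ⟪x, y⟫ - s))
          ∂stdGaussian E ∂stdGaussian E := by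
  set γ := stdGaussian E with hγ
  set T : Set E := {y | (1 + τ) * finrank ℝ E ≤ ‖y‖ ^ 2} with hT
  set B' : Set E := B ∩ {y | ‖y‖ ^ 2 < (1 + τ) * finrank ℝ E} with hB'
  set G : E → ℝ≥0∞ := fun x => ∫⁻ y in B', ENNReal.ofReal
    (coshWeight η τ x * Real.cosh (η / (1 - η ^ 2) * ⟪x, y⟫ - s)) ∂γ with hG
  have hGm : Measurable G := by
    refine Measurable.lintegral_prod_right' (f := fun z : E × E => ENNReal.ofReal
      (coshWeight η τ z.1 * Real.cosh (η / (1 - η ^ 2) * ⟪z.1, z.2⟫ - s))) ?_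
    unfold coshWeight
    fun_prop
  have hTle : γ.real T ≤ ε * p / 2 := by
    refine le_trans ?_ hp2
    exact ENNReal.toReal_le_of_le_ofReal (by positivity) (stdGaussian_le_norm_sq hτ hτ1)
  have hp0 : 0 < p := by
    have := hp1.trans_lt' (Real.exp_pos _)
    by_contra! h
    nlinarith
  have hBle : (1 - ε) * γ.real B ≤ γ.real B' := by
    have h1 : γ.real B ≤ γ.real B' + γ.real T := by
      refine (measureReal_mono (fun y hy => ?_)).trans (measureReal_union_le B' T)
      by_cases h : ‖y‖ ^ 2 < (1 + τ) * finrank ℝ E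
      · exact Or.inl ⟨hy, h⟩
      · exact Or.inr (not_lt.1 h)
    nlinarith
  have hB'lt : ENNReal.ofReal (Real.exp (-(k * (ε ^ 2 / (8 * Real.exp (16 * c ^ 2)))))) < γ B' := by
    rw [← ofReal_measureReal (μ := γ) (s := B')]
    refine (ENNReal.ofReal_lt_ofReal_iff_of_nonneg (Real.exp_pos _).le).2 (hp3.trans_le ?_)
    refine le_trans ?_ hBle
    gcongr
  set S : Set E := {x | ‖x‖ ^ 2 < (1 + τ) * finrank ℝ E ∧
    G x ≤ ENNReal.ofReal (1 - ε) * γ B'} with hS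
  have hSle : γ.real S ≤ ε * p / 2 := by
    refine le_trans ?_ hp1
    exact ENNReal.toReal_le_of_le_ofReal (by positivity)
      (stdGaussian_average_cosh_le hε hε1 hτ hτ1 hτε hηn hητ hη2 hk hB'lt)
  set W : Set E := {x | ENNReal.ofReal (1 - ε) * γ B' ≤ G x} with hW
  have hAle : (1 - ε) * γ.real A ≤ (γ.restrict A).real W := by
    have hWm : MeasurableSet W := measurableSet_le measurable_const hGm
    have h1 : γ.real A ≤ γ.real (W ∩ A) + (γ.real S + γ.real T) := by
      refine (measureReal_mono (fun x hx => ?_)).trans ((measureReal_union_le _ (S ∪ T)).trans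
        (add_le_add_right (measureReal_union_le S T) _))
      by_cases h : ‖x‖ ^ 2 < (1 + τ) * finrank ℝ E
      · by_cases h' : G x ≤ ENNReal.ofReal (1 - ε) * γ B'
        · exact Or.inr (Or.inl ⟨h, h'⟩)
        · exact Or.inl ⟨(not_le.1 h').le, hx⟩
      · exact Or.inr (Or.inr (not_lt.1 h))
    rw [measureReal_restrict_apply hWm]
    nlinarith
  calc ENNReal.ofReal ((1 - ε) ^ 3 * γ.real A * γ.real B)
      = ENNReal.ofReal ((1 - ε) * ((1 - ε) * γ.real B) * ((1 - ε) * γ.real A)) := by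
        congr 1; ring
    _ ≤ ENNReal.ofReal ((1 - ε) * γ.real B' * (γ.restrict A).real W) := by
        have h1 : 0 ≤ 1 - ε := by linarith
        apply ENNReal.ofReal_le_ofReal
        gcongr
    _ = ENNReal.ofReal (1 - ε) * γ B' * γ.restrict A W := by
        have h1 : 0 ≤ 1 - ε := by linarith
        rw [ENNReal.ofReal_mul (by positivity), ENNReal.ofReal_mul h1, ofReal_measureReal,
          ofReal_measureReal]
    _ ≤ ∫⁻ x in A, G x ∂γ := mul_meas_ge_le_lintegral hGm _

end

instance isProbabilityMeasure_stdGaussianPi (N : ℕ) : IsProbabilityMeasure (stdGaussianPi N) := by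
  unfold stdGaussianPi; infer_instance

/-- Density of `η x + √(1-η²) g`, for `g` a standard Gaussian, with respect to the standard
Gaussian measure on `ℝ`. -/
noncomputable def corrDensity (η x y : ℝ) : ℝ :=
  (√(1 - η ^ 2))⁻¹ * Real.exp ((2 * η * (x * y) - η ^ 2 * x ^ 2 - η ^ 2 * y ^ 2)
    / (2 * (1 - η ^ 2)))

lemma corrDensity_nonneg (η x y : ℝ) : 0 ≤ corrDensity η x y := by
  unfold corrDensity; positivity

lemma gaussianReal_map_add_mul {η : ℝ} (hη : η ^ 2 < 1) (x : ℝ) :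
    (gaussianReal 0 1).map (fun z => η * x + √(1 - η ^ 2) * z)
      = (gaussianReal 0 1).withDensity fun y => ENNReal.ofReal (corrDensity η x y) := by
  have hpos : 0 < 1 - η ^ 2 := by linarith
  have hmap : (gaussianReal 0 1).map (fun z => η * x + √(1 - η ^ 2) * z)
      = gaussianReal (η * x) (Real.toNNReal (1 - η ^ 2)) := by
    have : (fun z => η * x + √(1 - η ^ 2) * z)
        = (fun z => η * x + z) ∘ fun z => √(1 - η ^ 2) * z := rfl
    rw [this, ← Measure.map_map (by fun_prop) (by fun_prop), gaussianReal_map_const_mul,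
      gaussianReal_map_const_add]
    congr 1
    · ring
    · ext
      simp [Real.sq_sqrt hpos.le, hpos.le]
  have hv : Real.toNNReal (1 - η ^ 2) ≠ 0 := by simpa using hpos
  rw [hmap, gaussianReal_of_var_ne_zero _ hv, gaussianReal_of_var_ne_zero _ one_ne_zero,
    ← withDensity_mul _ (measurable_gaussianPDF 0 1) (by unfold corrDensity; fun_prop)]
  congr 1
  ext y
  simp only [Pi.mul_apply, gaussianPDF]
  rw [← ENNReal.ofReal_mul (gaussianPDFReal_nonneg _ _ _)]
  congr 1
  simp only [gaussianPDFReal, corrDensity, Real.coe_toNNReal _ hpos.le, NNReal.coe_one, mul_one,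
    sub_zero]
  rw [Real.sqrt_mul (by positivity), mul_inv, mul_mul_mul_comm, ← Real.exp_add]
  congr 2
  field_simp
  ring

lemma stdGaussianPi_map_add_smul {N : ℕ} {η : ℝ} (hη : η ^ 2 < 1) (x : Fin N → ℝ) :
    (stdGaussianPi N).map (fun z => η • x + √(1 - η ^ 2) • z)
      = (stdGaussianPi N).withDensity fun y => ENNReal.ofReal (∏ i, corrDensity η (x i) (y i)) := by
  have hpr : ∀ i, IsProbabilityMeasure
      ((gaussianReal 0 1).map (fun z => η * x i + √(1 - η ^ 2) * z)) :=
    fun i => Measure.isProbabilityMeasure_map (by fun_prop)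
  have h1 : (stdGaussianPi N).map (fun z => η • x + √(1 - η ^ 2) • z)
      = Measure.pi fun i => (gaussianReal 0 1).map (fun z => η * x i + √(1 - η ^ 2) * z) :=
    Measure.pi_map_pi (f := fun i z => η * x i + √(1 - η ^ 2) * z) fun i => by fun_prop
  rw [h1]
  refine Measure.pi_eq fun S hS => ?_
  have hm : ∀ i, Measurable fun y => ENNReal.ofReal (corrDensity η (x i) y) := fun i => by
    unfold corrDensity; fun_prop
  rw [withDensity_apply _ (MeasurableSet.univ_pi hS), ← lintegral_indicator (MeasurableSet.univ_pi hS)]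
  have hpt : ∀ y : Fin N → ℝ, (Set.univ.pi S).indicator
      (fun y => ENNReal.ofReal (∏ i, corrDensity η (x i) (y i))) y
      = ∏ i, (S i).indicator (fun y => ENNReal.ofReal (corrDensity η (x i) y)) (y i) := by
    intro y
    by_cases hy : y ∈ Set.univ.pi S
    · rw [Set.indicator_of_mem hy, ENNReal.ofReal_prod_of_nonneg fun i _ => corrDensity_nonneg _ _ _]
      exact Finset.prod_congr rfl fun i _ => (Set.indicator_of_mem (hy i trivial)
        fun y => ENNReal.ofReal (corrDensity η (x i) y)).symm
    · rw [Set.indicator_of_notMem hy]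
      simp only [Set.mem_univ_pi, not_forall] at hy
      obtain ⟨i, hi⟩ := hy
      exact (Finset.prod_eq_zero (Finset.mem_univ i) (Set.indicator_of_notMem hi _)).symm
  have hmi : ∀ i, Measurable ((S i).indicator fun y => ENNReal.ofReal (corrDensity η (x i) y)) :=
    fun i => (hm i).indicator (hS i)
  rw [lintegral_congr hpt, stdGaussianPi, lintegral_prod_eq_prod_lintegral_of_indepFun Finset.univ
    (fun i (y : Fin N → ℝ) => (S i).indicator (fun y => ENNReal.ofReal (corrDensity η (x i) y)) (y i))
    (iIndepFun_pi fun i => (hmi i).aemeasurable) fun i => (hmi i).comp (measurable_pi_apply i)]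
  refine Finset.prod_congr rfl fun i _ => ?_
  rw [gaussianReal_map_add_mul hη, withDensity_apply _ (hS i), ← lintegral_indicator (hS i)]
  exact (measurePreserving_eval (fun _ : Fin N => gaussianReal 0 1) i).lintegral_comp (hmi i)

lemma Xi_prod {N : ℕ} {η : ℝ} (hη : η ^ 2 < 1) {A B : Set (Fin N → ℝ)} (hA : MeasurableSet A)
    (hB : MeasurableSet B) :
    Xi N η (A ×ˢ B) = ∫⁻ x in A, ∫⁻ y in B, ENNReal.ofReal (∏ i, corrDensity η (x i) (y i))
      ∂stdGaussianPi N ∂stdGaussianPi N := by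
  rw [Xi, Measure.map_apply (by fun_prop) (hA.prod hB),
    Measure.prod_apply ((by fun_prop : Measurable fun xz : (Fin N → ℝ) × (Fin N → ℝ) =>
      (xz.1, η • xz.1 + √(1 - η ^ 2) • xz.2)) (hA.prod hB)), ← lintegral_indicator hA]
  refine lintegral_congr fun x => ?_
  by_cases hx : x ∈ A
  · rw [Set.indicator_of_mem hx, ← withDensity_apply _ hB, ← stdGaussianPi_map_add_smul hη,
      Measure.map_apply (by fun_prop) hB]
    congr 1
    ext z
    simp [hx]
  · rw [Set.indicator_of_notMem hx]
    convert measure_empty (μ := stdGaussianPi N)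
    ext z
    simp [hx]

lemma prod_corrDensity {N : ℕ} (η : ℝ) (x y : Fin N → ℝ) :
    ∏ i, corrDensity η (x i) (y i) = (√(1 - η ^ 2))⁻¹ ^ N *
      Real.exp ((2 * η * ⟪WithLp.toLp 2 x, WithLp.toLp 2 y⟫ - η ^ 2 * ‖WithLp.toLp 2 x‖ ^ 2
        - η ^ 2 * ‖WithLp.toLp 2 y‖ ^ 2) / (2 * (1 - η ^ 2))) := by
  simp only [corrDensity]
  rw [Finset.prod_mul_distrib, ← Real.exp_sum, ← Finset.sum_div, Finset.sum_sub_distrib,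
    Finset.sum_sub_distrib, ← Finset.mul_sum, ← Finset.mul_sum, ← Finset.mul_sum,
    EuclideanSpace.real_norm_sq_eq, EuclideanSpace.real_norm_sq_eq]
  simp [PiLp.inner_apply, mul_comm]

lemma coshWeight_mul_cosh_le {N : ℕ} {η τ s : ℝ} (hη : η ^ 2 < 1) {x y : Fin N → ℝ}
    (hy : ‖WithLp.toLp 2 y‖ ^ 2 ≤ (1 + τ) * N) :
    coshWeight η τ (WithLp.toLp 2 x)
        * Real.cosh (η / (1 - η ^ 2) * ⟪WithLp.toLp 2 x, WithLp.toLp 2 y⟫ - s)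
      ≤ Real.exp s / 2 * ∏ i, corrDensity (-η) (x i) (y i)
        + Real.exp (-s) / 2 * ∏ i, corrDensity η (x i) (y i) := by
  have hpos : 0 < 1 - η ^ 2 := by linarith
  rw [prod_corrDensity, prod_corrDensity, coshWeight, Real.cosh_eq, neg_sq, finrank_euclideanSpace_fin]
  set X := ‖WithLp.toLp 2 x‖ ^ 2
  set Y := ‖WithLp.toLp 2 y‖ ^ 2
  set I := ⟪WithLp.toLp 2 x, WithLp.toLp 2 y⟫
  set D := 1 - η ^ 2 with hD
  have hpow : Real.exp (η ^ 2 * N / 2) ≤ (√D)⁻¹ ^ N := by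
    have h1 : Real.exp (η ^ 2 / 2) ≤ (√D)⁻¹ := by
      rw [← Real.sqrt_inv, Real.exp_half]
      apply Real.sqrt_le_sqrt
      rw [le_inv_comm₀ (Real.exp_pos _) hpos, ← Real.exp_neg]
      have := Real.add_one_le_exp (-η ^ 2)
      linarith
    calc _ = Real.exp (η ^ 2 / 2) ^ N := by rw [← Real.exp_nat_mul]; ring_nf
      _ ≤ _ := by gcongr
  have hexp : Real.exp (-(η ^ 2 * ((1 + τ) * N) / (2 * D))) ≤ Real.exp (-(η ^ 2 * Y / (2 * D))) := by
    gcongr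
  have h1 : Real.exp ((2 * -η * I - η ^ 2 * X - η ^ 2 * Y) / (2 * D))
      = Real.exp (-(η ^ 2 * Y / (2 * D))) * Real.exp (-(η ^ 2 * X / (2 * D)))
        * Real.exp (-(η / D * I)) := by
    rw [← Real.exp_add, ← Real.exp_add]; congr 1; field_simp; ring
  have h2 : Real.exp ((2 * η * I - η ^ 2 * X - η ^ 2 * Y) / (2 * D))
      = Real.exp (-(η ^ 2 * Y / (2 * D))) * Real.exp (-(η ^ 2 * X / (2 * D)))
        * Real.exp (η / D * I) := by
    rw [← Real.exp_add, ← Real.exp_add]; congr 1; field_simp; ring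
  have h3 : Real.exp (η ^ 2 * N / 2 - η ^ 2 * ((1 + τ) * N) / (2 * D) - η ^ 2 * X / (2 * D))
      = Real.exp (η ^ 2 * N / 2) * (Real.exp (-(η ^ 2 * ((1 + τ) * N) / (2 * D)))
        * Real.exp (-(η ^ 2 * X / (2 * D)))) := by
    rw [← Real.exp_add, ← Real.exp_add]; congr 1; ring
  rw [h1, h2, h3]
  calc _ ≤ (√D)⁻¹ ^ N * (Real.exp (-(η ^ 2 * Y / (2 * D))) * Real.exp (-(η ^ 2 * X / (2 * D))))
        * ((Real.exp (η / D * I - s) + Real.exp (-(η / D * I - s))) / 2) := by gcongr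
    _ = _ := by
      rw [sub_eq_add_neg, Real.exp_add, neg_add, neg_neg, Real.exp_add]
      ring

lemma ofReal_Xi_eq_lintegral {N : ℕ} {η : ℝ} (hη : η ^ 2 < 1) (s : ℝ) {A B : Set (Fin N → ℝ)}
    (hA : MeasurableSet A) (hB : MeasurableSet B) :
    ENNReal.ofReal (1 / 2 * (Real.exp s * (Xi N (-η) (A ×ˢ B)).toReal
        + Real.exp (-s) * (Xi N η (A ×ˢ B)).toReal))
      = ∫⁻ x in A, ∫⁻ y in B, ENNReal.ofReal
          (Real.exp s / 2 * ∏ i, corrDensity (-η) (x i) (y i)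
            + Real.exp (-s) / 2 * ∏ i, corrDensity η (x i) (y i))
          ∂stdGaussianPi N ∂stdGaussianPi N := by
  have hm : ∀ ζ : ℝ, Measurable fun z : (Fin N → ℝ) × (Fin N → ℝ) =>
      ENNReal.ofReal (∏ i, corrDensity ζ (z.1 i) (z.2 i)) := fun ζ => by
    unfold corrDensity; fun_prop
  have hm1 : ∀ (ζ : ℝ) (x : Fin N → ℝ), Measurable fun y : Fin N → ℝ =>
      ENNReal.ofReal (∏ i, corrDensity ζ (x i) (y i)) := fun ζ x => by
    unfold corrDensity; fun_prop
  have hm2 : ∀ ζ, Measurable fun x : Fin N → ℝ =>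
      ∫⁻ y in B, ENNReal.ofReal (∏ i, corrDensity ζ (x i) (y i)) ∂stdGaussianPi N :=
    fun ζ => (hm ζ).lintegral_prod_right'
  have hfin : ∀ ζ, IsFiniteMeasure (Xi N ζ) := fun ζ => by unfold Xi; infer_instance
  have hprod : ∀ ζ (x y : Fin N → ℝ), 0 ≤ ∏ i, corrDensity ζ (x i) (y i) :=
    fun ζ x y => Finset.prod_nonneg fun i _ => corrDensity_nonneg _ _ _
  have hpt : ∀ x : Fin N → ℝ, ∫⁻ y in B, ENNReal.ofReal
      (Real.exp s / 2 * ∏ i, corrDensity (-η) (x i) (y i)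
        + Real.exp (-s) / 2 * ∏ i, corrDensity η (x i) (y i)) ∂stdGaussianPi N
      = ENNReal.ofReal (Real.exp s / 2) * ∫⁻ y in B, ENNReal.ofReal
          (∏ i, corrDensity (-η) (x i) (y i)) ∂stdGaussianPi N
        + ENNReal.ofReal (Real.exp (-s) / 2) * ∫⁻ y in B, ENNReal.ofReal
          (∏ i, corrDensity η (x i) (y i)) ∂stdGaussianPi N := by
    intro x
    rw [← lintegral_const_mul _ (hm1 _ x), ← lintegral_const_mul _ (hm1 _ x),
      ← lintegral_add_left ((hm1 _ x).const_mul _)]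
    refine lintegral_congr fun y => ?_
    rw [ENNReal.ofReal_add (mul_nonneg (by positivity) (hprod _ _ _))
      (mul_nonneg (by positivity) (hprod _ _ _)), ENNReal.ofReal_mul (by positivity),
      ENNReal.ofReal_mul (by positivity)]
  rw [lintegral_congr hpt, lintegral_add_left ((hm2 _).const_mul _),
    lintegral_const_mul _ (hm2 _), lintegral_const_mul _ (hm2 _), ← Xi_prod hη hA hB,
    ← Xi_prod (by rwa [neg_sq]) hA hB]
  rw [show 1 / 2 * (Real.exp s * (Xi N (-η) (A ×ˢ B)).toReal
      + Real.exp (-s) * (Xi N η (A ×ˢ B)).toReal) = Real.exp s / 2 * (Xi N (-η) (A ×ˢ B)).toReal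
      + Real.exp (-s) / 2 * (Xi N η (A ×ˢ B)).toReal by ring,
    ENNReal.ofReal_add (by positivity) (by positivity), ENNReal.ofReal_mul (by positivity),
    ENNReal.ofReal_mul (by positivity), ENNReal.ofReal_toReal (measure_ne_top _ _),
    ENNReal.ofReal_toReal (measure_ne_top _ _)]

lemma measurePreserving_toLp_stdGaussianPi (N : ℕ) :
    MeasurePreserving (WithLp.toLp 2) (stdGaussianPi N)
      (stdGaussian (EuclideanSpace ℝ (Fin N))) :=
  ⟨by fun_prop, map_pi_eq_stdGaussian⟩

theorem le_half_mul_exp_Xi {N k : ℕ} {c ε τ η s p : ℝ} {A B : Set (Fin N → ℝ)}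
    (hA : MeasurableSet A) (hB : MeasurableSet B) (hε : 0 < ε) (hε1 : ε < 1) (hτ : 0 < τ)
    (hτ1 : τ ≤ 1) (hτε : 3 * τ * c ^ 2 ≤ ε / 2) (hηn : η ^ 2 * N ≤ c ^ 2) (hητ : η ^ 2 ≤ τ)
    (hη2 : η ^ 2 ≤ 1 / 2) (hk : k ≤ τ * N / 4)
    (hpA : p ≤ (stdGaussianPi N A).toReal) (hpB : p ≤ (stdGaussianPi N B).toReal)
    (hp1 : Real.exp (-(τ * N / 8)) ≤ ε * p / 2)
    (hp2 : Real.exp (-(τ ^ 2 * N / 8)) ≤ ε * p / 2)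
    (hp3 : Real.exp (-(k * (ε ^ 2 / (8 * Real.exp (16 * c ^ 2))))) < (1 - ε) * p) :
    (1 - ε) ^ 3 * (stdGaussianPi N A).toReal * (stdGaussianPi N B).toReal
      ≤ 1 / 2 * (Real.exp s * (Xi N (-η) (A ×ˢ B)).toReal
        + Real.exp (-s) * (Xi N η (A ×ˢ B)).toReal) := by
  have hmp := measurePreserving_toLp_stdGaussianPi N
  have hme : MeasurableEmbedding (WithLp.toLp 2 : (Fin N → ℝ) → EuclideanSpace ℝ (Fin N)) :=
    (MeasurableEquiv.toLp 2 (Fin N → ℝ)).measurableEmbedding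
  have hη1 : η ^ 2 < 1 := by linarith
  set A' : Set (EuclideanSpace ℝ (Fin N)) := WithLp.ofLp ⁻¹' A with hA'
  set B' : Set (EuclideanSpace ℝ (Fin N)) := WithLp.ofLp ⁻¹' B with hB'
  have hB'm : MeasurableSet B' := (by fun_prop : Measurable WithLp.ofLp) hB
  have hAA : (stdGaussian (EuclideanSpace ℝ (Fin N))).real A' = (stdGaussianPi N A).toReal :=
    congrArg ENNReal.toReal (hmp.measure_preimage_emb hme A').symm
  have hBB : (stdGaussian (EuclideanSpace ℝ (Fin N))).real B' = (stdGaussianPi N B).toReal :=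
    congrArg ENNReal.toReal (hmp.measure_preimage_emb hme B').symm
  have hmain := le_lintegral_coshWeight (E := EuclideanSpace ℝ (Fin N)) (c := c) (ε := ε) (τ := τ)
    (η := η) (s := s) (p := p) (k := k) (A := A') (B := B') hε hε1 hτ hτ1 hτε
    (by simpa using hηn) hητ hη2 (by simpa using hk) (hAA ▸ hpA) (hBB ▸ hpB) (by simpa using hp1)
    (by simpa using hp2) hp3
  rw [hAA, hBB] at hmain
  refine (ENNReal.ofReal_le_ofReal_iff (by positivity)).1 (hmain.trans ?_)
  rw [ofReal_Xi_eq_lintegral hη1 s hA hB, ← hmp.setLIntegral_comp_preimage_emb hme]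
  refine setLIntegral_mono' hA fun x _ => ?_
  rw [← hmp.setLIntegral_comp_preimage_emb hme]
  refine le_trans (setLIntegral_mono' ?_ fun y hy => ENNReal.ofReal_le_ofReal
    (coshWeight_mul_cosh_le hη1 ?_)) (lintegral_mono_set fun y hy => hy.1)
  · exact hmp.measurable (hB'm.inter (measurableSet_lt (by fun_prop) (by fun_prop)))
  · have h : ‖WithLp.toLp 2 y‖ ^ 2 < (1 + τ) * finrank ℝ (EuclideanSpace ℝ (Fin N)) := hy.2
    rw [finrank_euclideanSpace_fin] at h
    exact h.le

theorem stmt0 :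
    ∀ c > (0 : ℝ), ∀ ε > (0 : ℝ), ∃ δ > (0 : ℝ), ∃ N₀ : ℕ, ∀ N ≥ N₀,
      ∀ η : ℝ, 0 ≤ η → η ≤ c / Real.sqrt N →
        ∀ A B : Set (Fin N → ℝ), MeasurableSet A → MeasurableSet B →
          (stdGaussianPi N A).toReal ≥ (2 : ℝ) ^ (-δ * (N : ℝ)) →
          (stdGaussianPi N B).toReal ≥ (2 : ℝ) ^ (-δ * (N : ℝ)) →
          ∀ s : ℝ,
            (1 / 2) * (Real.exp s * (Xi N (-η) (A ×ˢ B)).toReal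
                + Real.exp (-s) * (Xi N η (A ×ˢ B)).toReal)
              ≥ (1 - ε) * (stdGaussianPi N A).toReal * (stdGaussianPi N B).toReal := by
  intro c hc ε hε
  obtain ⟨e, he0, he1, heε⟩ : ∃ e : ℝ, 0 < e ∧ e ≤ 1 / 4 ∧ 3 * e ≤ ε :=
    ⟨min (1 / 4) (ε / 3), by positivity, min_le_left _ _, by
      linarith [min_le_right (1 / 4) (ε / 3)]⟩
  obtain ⟨τ, hτ0, hτ1, hτc⟩ : ∃ τ : ℝ, 0 < τ ∧ τ ≤ 1 ∧ 3 * τ * c ^ 2 ≤ e / 2 := by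
    refine ⟨min 1 (e / (6 * c ^ 2)), by positivity, min_le_left _ _, ?_⟩
    calc 3 * min 1 (e / (6 * c ^ 2)) * c ^ 2 ≤ 3 * (e / (6 * c ^ 2)) * c ^ 2 := by
          gcongr; exact min_le_right _ _
      _ = e / 2 := by field_simp; norm_num
  set α := e ^ 2 / (8 * Real.exp (16 * c ^ 2)) with hα
  have hα0 : 0 < α := by positivity
  obtain ⟨β, hβ0, hβ1, hβ2⟩ : ∃ β : ℝ, 0 < β ∧ β ≤ τ ^ 2 / 8 ∧ β ≤ τ / 8 * α :=
    ⟨min (τ ^ 2 / 8) (τ / 8 * α), by positivity, min_le_left _ _, min_le_right _ _⟩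
  have hlog : 0 < Real.log (2 / e) := Real.log_pos (by rw [lt_div_iff₀ he0]; linarith)
  refine ⟨β / 2, by positivity,
    ⌈c ^ 2 / τ + 2 * c ^ 2 + 8 / τ + 2 / β * Real.log (2 / e) + 1⌉₊, ?_⟩
  intro N hN η hη0 hη A B hA hB hpA hpB s
  have hNr : c ^ 2 / τ + 2 * c ^ 2 + 8 / τ + 2 / β * Real.log (2 / e) + 1 ≤ N := Nat.ceil_le.1 hN
  have hb1 : 0 < c ^ 2 / τ := by positivity
  have hb2 : 0 < 2 * c ^ 2 := by positivity
  have hb3 : 0 < 8 / τ := by positivity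
  have hb4 : 0 < 2 / β * Real.log (2 / e) := by positivity
  have hN0 : (0 : ℝ) < N := by linarith
  have hηn : η ^ 2 * N ≤ c ^ 2 := by
    have h1 : η * √N ≤ c := (le_div_iff₀ (Real.sqrt_pos.2 hN0)).1 hη
    calc η ^ 2 * N = (η * √N) ^ 2 := by rw [mul_pow, Real.sq_sqrt hN0.le]
      _ ≤ c ^ 2 := by gcongr
  have hητ : η ^ 2 ≤ τ := by
    have h1 : c ^ 2 ≤ N * τ := (div_le_iff₀ hτ0).1 (by linarith)
    exact le_of_mul_le_mul_right (by linarith) hN0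
  have hη2 : η ^ 2 ≤ 1 / 2 :=
    le_of_mul_le_mul_right (by linarith) hN0
  set p : ℝ := (2 : ℝ) ^ (-(β / 2) * (N : ℝ)) with hp
  have hp0 : 0 < p := by positivity
  have hpexp : Real.exp (-(β / 2 * N)) ≤ p := by
    rw [hp, Real.rpow_def_of_pos two_pos]
    apply Real.exp_le_exp.2
    have h1 : Real.log 2 ≤ 1 := by linarith [Real.log_two_lt_d9]
    have h2 := mul_le_mul_of_nonneg_left h1 (by positivity : 0 ≤ β / 2 * N)
    linarith
  have hsmall : Real.exp (-(β * N)) ≤ e * p / 2 := by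
    have h1 : Real.exp (-(β / 2 * N)) ≤ e / 2 := by
      rw [← Real.exp_log (by positivity : 0 < e / 2)]
      apply Real.exp_le_exp.2
      have h2 : Real.log (e / 2) = -Real.log (2 / e) := by rw [← Real.log_inv, inv_div]
      have h3 : 2 / β * Real.log (2 / e) ≤ N := by linarith
      have h4 : Real.log (2 / e) = β / 2 * (2 / β * Real.log (2 / e)) := by field_simp
      rw [h2, h4]
      gcongr
    calc Real.exp (-(β * N)) = Real.exp (-(β / 2 * N)) * Real.exp (-(β / 2 * N)) := by
          rw [← Real.exp_add]; ring_nf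
      _ ≤ e / 2 * p := by gcongr
      _ = _ := by ring
  have hk : τ / 8 * N ≤ (⌊τ * N / 4⌋₊ : ℝ) := by
    have h1 := Nat.lt_floor_add_one (τ * N / 4)
    have h2 : 8 ≤ N * τ := (div_le_iff₀ hτ0).1 (by linarith)
    linarith
  have hττ : τ ^ 2 * N ≤ τ * N :=
    mul_le_mul_of_nonneg_right (pow_le_of_le_one hτ0.le hτ1 two_ne_zero) hN0.le
  have hβN : β * N ≤ τ ^ 2 / 8 * N := mul_le_mul_of_nonneg_right hβ1 hN0.le
  have hep : e * p ≤ 1 / 4 * p := mul_le_mul_of_nonneg_right he1 hp0.le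
  have hmain := le_half_mul_exp_Xi (k := ⌊τ * N / 4⌋₊) (s := s) hA hB he0 (by linarith) hτ0 hτ1
    hτc hηn hητ hη2 (Nat.floor_le (by positivity)) hpA hpB
    (hsmall.trans' (Real.exp_le_exp.2 (by linarith)))
    (hsmall.trans' (Real.exp_le_exp.2 (by linarith)))
    (lt_of_le_of_lt (hsmall.trans' (Real.exp_le_exp.2 (by
      have h1 : τ / 8 * N * α ≤ ⌊τ * N / 4⌋₊ * α := by gcongr
      have h2 : β * N ≤ τ / 8 * α * N := by gcongr
      linarith))) (by linarith))
  refine ge_iff_le.2 (le_trans ?_ hmain)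
  have hcube : 1 - ε ≤ (1 - e) ^ 3 := by
    have h := mul_nonneg (sq_nonneg e) (by linarith : 0 ≤ 3 - e)
    linarith
  gcongr
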